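/- arXiv:math/0209130 — 2 statements merged into one kernel-verified Lean document; each statement's English description precedes it below -/
import Mathlib

section
/- Let Γ₀ be a countable discrete group acting on ℤ² via a homomorphism into SL(2,ℤ), with induced action σ̂ on 𝕋² = ẑ², and suppose the action of Γ₀ on ℤ² \ {0} has all orbits infinite. Then the measure-preserving action σ̂ of Γ₀ on (𝕋², Haar) is free and weakly mixing. In particular this holds for Γ₀ = SL(2,ℤ) itself and for any finite-index subgroup Γ₁ ⊂ SL(2,ℤ). -/
open MeasureTheory
open scoped Pointwise in

lemma exists_smul_ne {G X : Type*} [Group G] [MulAction G X] (S : Finset X)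
    (h : ∀ x ∈ S, (MulAction.orbit G x).Infinite) :
    ∃ g : G, ∀ x ∈ S, ∀ y ∈ S, g • x ≠ y := by
  classical
  by_contra! hc
  let c : X × X → G := fun p => if hp : ∃ g : G, g • p.1 = p.2 then hp.choose else 1
  have hcov : ⋃ p ∈ S ×ˢ S, c p • (MulAction.stabilizer G p.1 : Set G) = Set.univ := by
    refine Set.eq_univ_of_forall fun g => ?_
    obtain ⟨x, hx, y, hy, hxy⟩ := hc g
    simp only [Set.mem_iUnion]
    refine ⟨(x, y), Finset.mem_product.2 ⟨hx, hy⟩, ?_⟩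
    have hp : ∃ g : G, g • (x, y).1 = (x, y).2 := ⟨g, hxy⟩
    have h1 : c (x, y) • x = y := by
      have := hp.choose_spec
      simp only [c, dif_pos hp]
      exact this
    rw [mem_leftCoset_iff]
    change (c (x, y))⁻¹ * g ∈ MulAction.stabilizer G x
    rw [MulAction.mem_stabilizer_iff, mul_smul, hxy, inv_smul_eq_iff, h1]
  obtain ⟨p, hp, hfin⟩ := Subgroup.exists_finiteIndex_of_leftCoset_cover hcov
  apply hfin.index_ne_zero
  rw [MulAction.index_stabilizer]
  exact (h p.1 (Finset.mem_product.1 hp).1).ncard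

lemma exists_transpose_ne {Γ : Type*} [Group Γ]
    (ρ : Γ →* Matrix.SpecialLinearGroup (Fin 2) ℤ)
    (horb : ∀ v : Fin 2 → ℤ, v ≠ 0 →
        {w : Fin 2 → ℤ | ∃ g : Γ,
          w = (ρ g : Matrix (Fin 2) (Fin 2) ℤ).mulVec v}.Infinite)
    (S : Finset (Fin 2 → ℤ)) (hS : ∀ v ∈ S, v ≠ 0) :
    ∃ g : Γ, ∀ m ∈ S, ∀ n ∈ S, (ρ g : Matrix (Fin 2) (Fin 2) ℤ).transpose.mulVec n ≠ m := by
  classical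
  let _ : MulAction Γ (Fin 2 → ℤ) :=
    { smul := fun g v => (ρ g : Matrix (Fin 2) (Fin 2) ℤ).mulVec v
      one_smul := fun v => by
        change (ρ 1 : Matrix (Fin 2) (Fin 2) ℤ).mulVec v = v
        simp
      mul_smul := fun g h v => by
        change (ρ (g * h) : Matrix (Fin 2) (Fin 2) ℤ).mulVec v =
          (ρ g : Matrix (Fin 2) (Fin 2) ℤ).mulVec ((ρ h : Matrix (Fin 2) (Fin 2) ℤ).mulVec v)
        rw [Matrix.mulVec_mulVec, map_mul, Matrix.SpecialLinearGroup.coe_mul] }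
  have hsm : ∀ (g : Γ) (v : Fin 2 → ℤ), g • v = (ρ g : Matrix (Fin 2) (Fin 2) ℤ).mulVec v :=
    fun _ _ => rfl
  let J : (Fin 2 → ℤ) → (Fin 2 → ℤ) := fun v => ![v 1, - v 0]
  obtain ⟨g, hg⟩ := exists_smul_ne (G := Γ) (S.image J) (by
    intro x hx
    obtain ⟨v, hv, rfl⟩ := Finset.mem_image.1 hx
    have hne : J v ≠ 0 := by
      intro h0
      apply hS v hv
      have h1 := congrFun h0 0
      have h2 := congrFun h0 1
      simp [J] at h1 h2
      ext i
      fin_cases i <;> simp [h1, h2]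
    refine (horb _ hne).mono ?_
    rintro w ⟨g, rfl⟩
    exact ⟨g, rfl⟩)
  refine ⟨g⁻¹, fun m hm n hn h => ?_⟩
  refine hg (J n) (Finset.mem_image_of_mem _ hn) (J m) (Finset.mem_image_of_mem _ hm) ?_
  rw [hsm, ← h]
  ext i
  fin_cases i <;>
  simp [J, Matrix.mulVec, dotProduct, Fin.sum_univ_two, Matrix.SpecialLinearGroup.coe_inv,
    Matrix.adjugate_fin_two] <;> ring

lemma hilbert_mixing {Γ ι κ H : Type*} [NormedAddCommGroup H] [InnerProductSpace ℂ H]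
    [Finite κ] (b : HilbertBasis ι ℂ H) (i₀ : ι) (U : Γ → H →ₗᵢ[ℂ] H) (τ : Γ → ι → ι)
    (hU : ∀ g n, U g (b n) = b (τ g n))
    (hτ : ∀ S : Finset ι, ∃ g, ∀ m ∈ S, ∀ n ∈ S, τ g n = m ↔ (m = i₀ ∧ n = i₀))
    (u v : κ → H) (hu : ∀ k, ‖u k‖ ≤ 1) (hv : ∀ k, ‖v k‖ ≤ 1) (ε : ℝ) (hε : 0 < ε) :
    ∃ g, ∀ k l, ‖inner ℂ (u k) (U g (v l)) - inner ℂ (u k) (b i₀) * inner ℂ (b i₀) (v l)‖ ≤ ε := by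
  classical
  obtain ⟨δ, hδ, hδ1, hδε⟩ : ∃ δ : ℝ, 0 < δ ∧ δ ≤ 1 ∧ 6 * δ ≤ ε :=
    ⟨min 1 (ε / 6), by positivity, min_le_left _ _, by linarith [min_le_right 1 (ε / 6)]⟩
  let P : Finset ι → H → H := fun S a => ∑ i ∈ S, b.repr a i • b i
  have hP : ∀ a : H, ∀ᶠ S in Filter.atTop, ‖a - P S a‖ ≤ δ := by
    intro a
    have := (b.hasSum_repr a).eventually (Metric.closedBall_mem_nhds a hδ)
    filter_upwards [this] with S hS
    simpa [dist_eq_norm, norm_sub_rev, P] using hS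
  obtain ⟨S, hS1, hS2⟩ := ((Filter.eventually_all.2 fun k => hP (u k)).and
    (Filter.eventually_all.2 fun k => hP (v k))).exists
  obtain ⟨g, hg⟩ := hτ S
  refine ⟨g, fun k l => ?_⟩
  let B : H → H → ℂ := fun x y => inner ℂ x (U g y) - inner ℂ x (b i₀) * inner ℂ (b i₀) y
  have hb1 : ‖b i₀‖ = 1 := b.orthonormal.1 i₀
  have hB : ∀ x y, ‖B x y‖ ≤ 2 * ‖x‖ * ‖y‖ := by
    intro x y
    have h1 := norm_inner_le_norm (𝕜 := ℂ) x (U g y)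
    have h2 := norm_inner_le_norm (𝕜 := ℂ) x (b i₀)
    have h3 := norm_inner_le_norm (𝕜 := ℂ) (b i₀) y
    rw [LinearIsometry.norm_map] at h1
    rw [hb1, mul_one] at h2
    rw [hb1, one_mul] at h3
    calc ‖B x y‖ ≤ ‖inner ℂ x (U g y)‖ + ‖inner ℂ x (b i₀) * inner ℂ (b i₀) y‖ := norm_sub_le _ _
      _ ≤ ‖x‖ * ‖y‖ + ‖x‖ * ‖y‖ := by
        rw [norm_mul]
        gcongr
      _ = _ := by ring
  have hbb : ∀ m ∈ S, ∀ n ∈ S, B (b m) (b n) = 0 := by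
    intro m hm n hn
    have hi := orthonormal_iff_ite.1 b.orthonormal
    have := hg m hm n hn
    simp only [B, hU, hi]
    clear hg hi
    have h0 : (m = τ g n) ↔ (m = i₀ ∧ n = i₀) := by rw [← this, eq_comm]
    have h3 : (i₀ = n) ↔ (n = i₀) := eq_comm
    simp only [h0, h3]
    by_cases h1 : m = i₀ <;> by_cases h2 : n = i₀ <;> simp [h1, h2]
  have hPP : ∀ x y, B (P S x) (P S y) = 0 := by
    intro x y
    have : B (P S x) (P S y) = ∑ m ∈ S, ∑ n ∈ S,
        (starRingEnd ℂ (b.repr x m)) * (b.repr y n) * B (b m) (b n) := by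
      simp only [B, P, map_sum, map_smul, sum_inner, inner_sum, inner_smul_left, inner_smul_right,
        Finset.sum_mul_sum]
      rw [Finset.sum_comm, ← Finset.sum_sub_distrib]
      conv_rhs => rw [Finset.sum_comm]
      refine Finset.sum_congr rfl fun m _ => ?_
      rw [Finset.mul_sum, ← Finset.sum_sub_distrib]
      refine Finset.sum_congr rfl fun n _ => ?_
      ring
    rw [this]
    refine Finset.sum_eq_zero fun m hm => Finset.sum_eq_zero fun n hn => ?_
    rw [hbb m hm n hn, mul_zero]
  have hdec : B (u k) (v l) = B (u k - P S (u k)) (v l) + B (P S (u k)) (v l - P S (v l)) := by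
    have := hPP (u k) (v l)
    simp only [B, map_sub, inner_sub_left, inner_sub_right] at this ⊢
    linear_combination this
  have hPn : ‖P S (u k)‖ ≤ 2 := by
    have : P S (u k) = u k - (u k - P S (u k)) := by abel
    rw [this]
    refine (norm_sub_le _ _).trans ?_
    linarith [hu k, hS1 k]
  change ‖B (u k) (v l)‖ ≤ ε
  rw [hdec]
  calc _ ≤ 2 * ‖u k - P S (u k)‖ * ‖v l‖ + 2 * ‖P S (u k)‖ * ‖v l - P S (v l)‖ :=
        (norm_add_le _ _).trans (add_le_add (hB _ _) (hB _ _))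
    _ ≤ 2 * δ * 1 + 2 * 2 * δ := by
        gcongr
        exacts [hS1 k, hv l, hS2 l]
    _ ≤ ε := by linarith

lemma fourier_facts (μ : Measure (Fin 2 → UnitAddCircle)) [IsFiniteMeasure μ]
    (hμ : μ = Measure.pi (fun _ => AddCircle.haarAddCircle)) :
    Orthonormal ℂ (fun n : Fin 2 → ℤ => ContinuousMap.toLp (E := ℂ) 2 μ ℂ (UnitAddTorus.mFourier n)) ∧
    (Submodule.span ℂ (Set.range (fun n : Fin 2 → ℤ =>
      ContinuousMap.toLp (E := ℂ) 2 μ ℂ (UnitAddTorus.mFourier n)))).topologicalClosure = ⊤ := by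
  subst hμ
  exact ⟨UnitAddTorus.orthonormal_mFourier, UnitAddTorus.span_mFourierLp_closure_eq_top (by simp)⟩

lemma volume_torus : (volume : Measure (Fin 2 → UnitAddCircle)) =
    Measure.pi (fun _ => AddCircle.haarAddCircle) := by
  rw [volume_pi]
  congr 1
  funext i
  rw [AddCircle.volume_eq_smul_haarAddCircle]
  simp

lemma prob_torus : IsProbabilityMeasure (volume : Measure (Fin 2 → UnitAddCircle)) := by
  rw [volume_torus]
  infer_instance

lemma mFourier_eq (n : Fin 2 → ℤ) (x : Fin 2 → UnitAddCircle) :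
    UnitAddTorus.mFourier n x = (AddCircle.toCircle (∑ j, n j • x j) : ℂ) := by
  simp [UnitAddTorus.mFourier, Fin.sum_univ_two, fourier_apply, AddCircle.toCircle_add]

lemma row_null (n : Fin 2 → ℤ) (hn : n ≠ 0) :
    volume {x : Fin 2 → UnitAddCircle | ∑ j, n j • x j = 0} = 0 := by
  let φ : (Fin 2 → UnitAddCircle) →+ UnitAddCircle :=
    { toFun := fun x => ∑ j, n j • x j
      map_zero' := by simp
      map_add' := fun x y => by simp [Finset.sum_add_distrib] }
  have hcont : Continuous φ := by
    change Continuous fun x : Fin 2 → UnitAddCircle => ∑ j, n j • x j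
    fun_prop
  have hsurj : Function.Surjective φ := by
    intro y
    obtain ⟨j, hj⟩ := Function.ne_iff.1 hn
    induction y using QuotientAddGroup.induction_on with
    | H t =>
      refine ⟨Pi.single j ((t / n j : ℝ) : UnitAddCircle), ?_⟩
      change ∑ i, n i • (Pi.single j ((t / n j : ℝ) : UnitAddCircle) : Fin 2 → UnitAddCircle) i = _
      rw [Finset.sum_eq_single j]
      · rw [Pi.single_eq_same, ← AddCircle.coe_zsmul]
        congr 1
        have : (n j : ℝ) ≠ 0 := by exact_mod_cast hj
        rw [zsmul_eq_mul]
        field_simp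
      · intro i _ hi
        simp [Pi.single_eq_of_ne hi]
      · simp
  have hmp : MeasurePreserving φ volume volume :=
    AddMonoidHom.measurePreserving hcont hsurj 
      (by rw [prob_torus.measure_univ]; simp)
  have := hmp.measure_preimage (measurableSet_singleton (0 : UnitAddCircle)).nullMeasurableSet
  rw [show {x : Fin 2 → UnitAddCircle | ∑ j, n j • x j = 0} = φ ⁻¹' {0} from rfl, this]
  have := AddCircle.volume_closedBall (T := 1) (x := 0) 0
  simpa using this

theorem stmt13 {Γ : Type*} [Group Γ] [Countable Γ]
    (ρ : Γ →* Matrix.SpecialLinearGroup (Fin 2) ℤ)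
    (hinj : Function.Injective ρ)
    (horb : ∀ v : Fin 2 → ℤ, v ≠ 0 →
        {w : Fin 2 → ℤ | ∃ g : Γ,
          w = (ρ g : Matrix (Fin 2) (Fin 2) ℤ).mulVec v}.Infinite)
    (σ : Γ → (Fin 2 → UnitAddCircle) → (Fin 2 → UnitAddCircle))
    (hσ : ∀ (g : Γ) (x : Fin 2 → UnitAddCircle) (i : Fin 2),
        σ g x i = ∑ j, ((ρ g : Matrix (Fin 2) (Fin 2) ℤ) i j) • x j) :
    (∀ g : Γ, MeasurePreserving (σ g) volume volume) ∧
    (∀ g : Γ, g ≠ 1 → volume {x : Fin 2 → UnitAddCircle | σ g x = x} = 0) ∧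
    (∀ ε : ℝ, 0 < ε → ∀ F : Finset ((Fin 2 → UnitAddCircle) → ℂ),
      (∀ f ∈ F, Measurable f ∧ ∀ x, ‖f x‖ ≤ 1) →
      ∃ g : Γ, ∀ f₁ ∈ F, ∀ f₂ ∈ F,
        ‖(∫ x, f₁ (σ g x) * f₂ x) - (∫ x, f₁ x) * (∫ x, f₂ x)‖ ≤ ε) := by
  classical
  have := prob_torus
  have hmul : ∀ g h x, σ g (σ h x) = σ (g * h) x := by
    intro g h x
    ext i
    simp only [hσ, map_mul, Matrix.SpecialLinearGroup.coe_mul, Matrix.mul_apply, Fin.sum_univ_two]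
    module
  have hone : ∀ x, σ 1 x = x := by
    intro x
    ext i
    rw [hσ]
    fin_cases i <;> simp [Fin.sum_univ_two]
  have hmp : ∀ g : Γ, MeasurePreserving (σ g) volume volume := by
    intro g
    let φ : (Fin 2 → UnitAddCircle) →+ (Fin 2 → UnitAddCircle) :=
      { toFun := σ g
        map_zero' := by ext i; rw [hσ]; simp
        map_add' := fun x y => by
          ext i
          simp [hσ, Finset.sum_add_distrib] }
    have hcont : Continuous φ := by
      change Continuous (σ g)
      refine continuous_pi fun i => ?_
      simp only [hσ]
      fun_prop
    have hsurj : Function.Surjective φ := fun y => ⟨σ g⁻¹ y, by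
      change σ g (σ g⁻¹ y) = y
      rw [hmul, mul_inv_cancel, hone]⟩
    exact AddMonoidHom.measurePreserving hcont hsurj rfl
  refine ⟨hmp, ?_, ?_⟩
  · intro g hg
    have hne : (ρ g : Matrix (Fin 2) (Fin 2) ℤ) ≠ 1 := by
      intro h
      apply hg
      apply hinj
      rw [map_one]
      exact Subtype.ext h
    obtain ⟨i, hi⟩ : ∃ i, (fun j => (ρ g : Matrix (Fin 2) (Fin 2) ℤ) i j -
        (1 : Matrix (Fin 2) (Fin 2) ℤ) i j) ≠ 0 := by
      by_contra! h
      apply hne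
      ext i j
      exact sub_eq_zero.1 (congrFun (h i) j)
    refine measure_mono_null ?_ (row_null _ hi)
    intro x hx
    have hx' := congrFun hx i
    rw [hσ] at hx'
    simp only [Set.mem_ofPred_eq, sub_smul, Finset.sum_sub_distrib, hx', Matrix.one_apply]
    simp
  · intro ε hε F hF
    obtain ⟨hon, hspan⟩ := fourier_facts volume volume_torus
    let b : HilbertBasis (Fin 2 → ℤ) ℂ (Lp ℂ 2 (volume : Measure (Fin 2 → UnitAddCircle))) :=
      HilbertBasis.mk hon hspan.ge
    have hb : ∀ n, b n = ContinuousMap.toLp (E := ℂ) 2 volume ℂ (UnitAddTorus.mFourier n) :=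
      fun n => congrFun (HilbertBasis.coe_mk _ _) n
    have hbae : ∀ n, b n =ᵐ[volume] UnitAddTorus.mFourier n := fun n => by
      rw [hb]
      exact ContinuousMap.coeFn_toLp volume _
    let U : Γ → Lp ℂ 2 (volume : Measure (Fin 2 → UnitAddCircle)) →ₗᵢ[ℂ]
        Lp ℂ 2 (volume : Measure (Fin 2 → UnitAddCircle)) :=
      fun g => Lp.compMeasurePreservingₗᵢ ℂ (σ g) (hmp g)
    have hUae : ∀ g f, U g f =ᵐ[volume] f ∘ σ g := fun g f =>
      Lp.coeFn_compMeasurePreserving f (hmp g)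
    let τ : Γ → (Fin 2 → ℤ) → (Fin 2 → ℤ) := fun g n =>
      (ρ g : Matrix (Fin 2) (Fin 2) ℤ).transpose.mulVec n
    have hU : ∀ g n, U g (b n) = b (τ g n) := by
      intro g n
      apply Lp.ext
      filter_upwards [hUae g (b n), hbae (τ g n),
        (hmp g).quasiMeasurePreserving.ae (hbae n)] with x h1 h2 h3
      rw [h1, h2, Function.comp_apply, h3, mFourier_eq, mFourier_eq]
      congr 2
      simp only [hσ, τ, Fin.sum_univ_two, Matrix.mulVec, dotProduct, Matrix.transpose_apply]
      module
    have hτ : ∀ S : Finset (Fin 2 → ℤ), ∃ g, ∀ m ∈ S, ∀ n ∈ S, τ g n = m ↔ (m = 0 ∧ n = 0) := by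
      intro S
      obtain ⟨g, hg⟩ := exists_transpose_ne ρ horb (S.filter (· ≠ 0))
        (fun v hv => (Finset.mem_filter.1 hv).2)
      refine ⟨g, fun m hm n hn => ⟨fun h => ?_, ?_⟩⟩
      · have hn0 : n = 0 → m = 0 := by
          rintro rfl
          rw [← h]
          simp [τ]
        have hm0 : m = 0 → n = 0 := by
          rintro rfl
          refine Matrix.eq_zero_of_mulVec_eq_zero ?_ h
          rw [Matrix.det_transpose, Matrix.SpecialLinearGroup.det_coe]
          exact one_ne_zero
        by_cases h0 : m = 0
        · exact ⟨h0, hm0 h0⟩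
        · exact absurd h (hg m (Finset.mem_filter.2 ⟨hm, h0⟩) n
            (Finset.mem_filter.2 ⟨hn, fun h' => h0 (hn0 h')⟩))
      · rintro ⟨rfl, rfl⟩
        simp [τ]
    have hv : ∀ k : F, MemLp (k : (Fin 2 → UnitAddCircle) → ℂ) 2 volume := fun k =>
      MemLp.of_bound (hF k k.2).1.aestronglyMeasurable 1 (Filter.Eventually.of_forall (hF k k.2).2)
    have hu : ∀ k : F, MemLp (fun x => starRingEnd ℂ ((k : (Fin 2 → UnitAddCircle) → ℂ) x))
        2 volume := fun k =>
      MemLp.of_bound (Complex.continuous_conj.measurable.comp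
        (hF k k.2).1).aestronglyMeasurable 1
        (Filter.Eventually.of_forall fun x => by simpa using (hF k k.2).2 x)
    have hnorm : ∀ (f : (Fin 2 → UnitAddCircle) → ℂ) (hf : MemLp f 2 volume),
        (∀ x, ‖f x‖ ≤ 1) → ‖hf.toLp f‖ ≤ 1 := by
      intro f hf h
      have := Lp.norm_le_of_ae_bound (f := hf.toLp f) (C := 1) zero_le_one (by
        filter_upwards [hf.coeFn_toLp] with x hx
        rw [hx]
        exact h x)
      simpa [measureUnivNNReal] using this
    obtain ⟨g, hg⟩ := hilbert_mixing b 0 U τ hU hτ (fun k : F => (hu k).toLp _)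
      (fun k : F => (hv k).toLp _)
      (fun k => hnorm _ _ fun x => by simpa using (hF k k.2).2 x)
      (fun k => hnorm _ _ (hF k k.2).2) ε hε
    refine ⟨g, fun f₁ h₁ f₂ h₂ => ?_⟩
    have key := hg ⟨f₂, h₂⟩ ⟨f₁, h₁⟩
    have hb0 : b 0 =ᵐ[volume] fun _ => (1 : ℂ) := by
      filter_upwards [hbae 0] with x hx
      rw [hx, UnitAddTorus.mFourier_zero]
      rfl
    have e1 : inner ℂ ((hu ⟨f₂, h₂⟩).toLp _) (U g ((hv ⟨f₁, h₁⟩).toLp _)) =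
        ∫ x, f₁ (σ g x) * f₂ x := by
      rw [L2.inner_def]
      apply integral_congr_ae
      filter_upwards [(hu ⟨f₂, h₂⟩).coeFn_toLp, hUae g ((hv ⟨f₁, h₁⟩).toLp _),
        (hmp g).quasiMeasurePreserving.ae (hv ⟨f₁, h₁⟩).coeFn_toLp] with x a1 a2 a3
      rw [a1, a2, Function.comp_apply, a3]
      simp
    have e2 : inner ℂ ((hu ⟨f₂, h₂⟩).toLp _) (b 0) = ∫ x, f₂ x := by
      rw [L2.inner_def]
      apply integral_congr_ae
      filter_upwards [(hu ⟨f₂, h₂⟩).coeFn_toLp, hb0] with x a1 a2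
      rw [a1, a2]
      simp
    have e3 : inner ℂ (b 0) ((hv ⟨f₁, h₁⟩).toLp _) = ∫ x, f₁ x := by
      rw [L2.inner_def]
      apply integral_congr_ae
      filter_upwards [(hv ⟨f₁, h₁⟩).coeFn_toLp, hb0] with x a1 a2
      rw [a1, a2]
      simp
    rw [e1, e2, e3, mul_comm (∫ x, f₂ x)] at key
    exact key
end

section
/- Let N be a semifinite von Neumann algebra, and let J(N) denote the norm-closed two-sided ideal generated by the finite projections of N. Then an element T ∈ N belongs to J(N) if and only if for every s > 0 the spectral projection e_{[s,∞)}(|T|) is a finite projection of N. Consequently, the set of elements of N supported on finite projections is norm dense in J(N). -/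
variable {H : Type*} [NormedAddCommGroup H] [InnerProductSpace ℂ H] [CompleteSpace H]

/-- A projection belonging to a von Neumann algebra. -/
def IsProjIn (N : VonNeumannAlgebra H) (p : H →L[ℂ] H) : Prop :=
  p ∈ N ∧ p * p = p ∧ star p = p

/-- A finite projection of a von Neumann algebra: `p` is not Murray–von Neumann
equivalent (inside `N`) to a proper subprojection of itself. -/
def IsFiniteProjIn (N : VonNeumannAlgebra H) (p : H →L[ℂ] H) : Prop :=
  IsProjIn N p ∧ ∀ v : H →L[ℂ] H, v ∈ N → star v * v = p →
    (v * star v) * p = v * star v → v * star v = p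

/-- The compact ideal space `J(N)`: the norm-closed two-sided ideal generated by
the finite projections of `N`. -/
noncomputable def compactIdealSpace (N : VonNeumannAlgebra H) : Set (H →L[ℂ] H) :=
  closure (Submodule.span ℂ {y : H →L[ℂ] H |
    ∃ a b p : H →L[ℂ] H, a ∈ N ∧ b ∈ N ∧ IsFiniteProjIn N p ∧ y = a * p * b} : Set (H →L[ℂ] H))

open ContinuousLinearMap

theorem opmul_apply (x y : H →L[ℂ] H) (k : H) : (x * y) k = x (y k) := rfl

theorem mem_of_commutes (N : VonNeumannAlgebra H) (x : H →L[ℂ] H)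
    (h : ∀ c ∈ N.commutant, ∀ k, c (x k) = x (c k)) : x ∈ N := by
  rw [← N.commutant_commutant, VonNeumannAlgebra.mem_commutant_iff]
  intro g hg
  ext k
  exact h g hg k

theorem commutes_of_mem {N : VonNeumannAlgebra H} {x c : H →L[ℂ] H}
    (hx : x ∈ N) (hc : c ∈ N.commutant) (k : H) : c (x k) = x (c k) := by
  have := (VonNeumannAlgebra.mem_commutant_iff.1 hc) x hx
  exact (congrArg (fun f : H →L[ℂ] H => f k) this).symm

theorem starProjection_mem (N : VonNeumannAlgebra H) (K : Submodule ℂ H)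
    [K.HasOrthogonalProjection]
    (h : ∀ c ∈ N.commutant, ∀ k ∈ K, c k ∈ K) : K.starProjection ∈ N := by
  rw [VonNeumannAlgebra.IsStarProjection.mem_iff isStarProjection_starProjection]
  intro y hy
  rw [Module.End.mem_invtSubmodule]
  intro k hk
  rw [Submodule.range_starProjection] at hk
  rw [Submodule.mem_comap, Submodule.range_starProjection]
  exact h y hy k hk

theorem inner_star_left (x : H →L[ℂ] H) (h k : H) :
    inner ℂ (star x h) k = inner ℂ h (x k) := by
  rw [star_eq_adjoint, adjoint_inner_left]

theorem inner_star_right (x : H →L[ℂ] H) (h k : H) :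
    inner ℂ h (star x k) = inner ℂ (x h) k := by
  rw [star_eq_adjoint, adjoint_inner_right]

theorem norm_eq_of_star_mul {x y : H →L[ℂ] H} (h : star x * x = star y * y) (k : H) :
    ‖x k‖ = ‖y k‖ := by
  have h1 : ∀ z : H →L[ℂ] H, (‖z k‖ : ℂ)^2 = inner ℂ k ((star z * z) k) := by
    intro z
    rw [opmul_apply, inner_star_right, inner_self_eq_norm_sq_to_K]; rfl
  have h2 : (‖x k‖ : ℂ)^2 = (‖y k‖ : ℂ)^2 := by rw [h1, h1, h]
  have h3 : ‖x k‖^2 = ‖y k‖^2 := by exact_mod_cast h2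
  exact (sq_eq_sq₀ (norm_nonneg _) (norm_nonneg _)).1 h3

theorem star_mul_eq_of_norm {x y : H →L[ℂ] H} (h : ∀ k, ‖x k‖ = ‖y k‖) :
    star x * x = star y * y := by
  apply ContinuousLinearMap.coe_injective
  apply (ext_inner_map _ _).1
  intro k
  simp only [coe_coe, opmul_apply, inner_star_left]
  rw [inner_self_eq_norm_sq_to_K, inner_self_eq_norm_sq_to_K, h]

/-- polar decomposition inside `N` -/
theorem exists_polar (N : VonNeumannAlgebra H) {x : H →L[ℂ] H} (hx : x ∈ N) :
    ∃ u ∈ N, u * star u * u = u ∧ x * (star u * u) = x ∧ u * star u * x = x ∧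
      (∀ b : H →L[ℂ] H, x * b = 0 → u * b = 0) ∧
      (∀ b : H →L[ℂ] H, star x * b = 0 → star u * b = 0) := by
  set a : H →L[ℂ] H := CFC.abs x with ha
  have ha_sa : star a = a := (IsSelfAdjoint.of_nonneg (CFC.abs_nonneg x)).star_eq
  have haa : star a * a = star x * x := by rw [ha_sa]; exact CFC.abs_mul_abs x
  have hnorm : ∀ k, ‖a k‖ = ‖x k‖ := norm_eq_of_star_mul haa
  have haN : a ∈ N := by
    apply mem_of_commutes
    intro c hc k
    have hc1 : Commute x c := VonNeumannAlgebra.mem_commutant_iff.1 hc x hx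
    have hc2 : Commute x (star c) := VonNeumannAlgebra.mem_commutant_iff.1 (star_mem hc) x hx
    have : Commute a c := hc1.cfcAbs_left hc2
    exact congrArg (fun f : H →L[ℂ] H => f k) this.eq.symm
  let K : Submodule ℂ H := (LinearMap.range a.toLinearMap).topologicalClosure
  have hKc : IsClosed (K : Set H) := Submodule.isClosed_topologicalClosure _
  have : CompleteSpace K := hKc.completeSpace_coe
  have hmemK : ∀ k, a k ∈ K := fun k => Submodule.le_topologicalClosure _ ⟨k, rfl⟩
  let e : H →ₗ[ℂ] K := a.toLinearMap.codRestrict K hmemK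
  have he : ∀ k, (e k : H) = a k := fun k => rfl
  have hdense : DenseRange e := by
    intro z
    have hz : (z : H) ∈ closure (Set.range a) := z.2
    rw [mem_closure_iff_seq_limit] at hz ⊢
    obtain ⟨f, hf, hl⟩ := hz
    choose g hg using hf
    refine ⟨fun n => e (g n), fun n => ⟨g n, rfl⟩, ?_⟩
    rw [tendsto_subtype_rng]
    simpa only [he, hg] using hl
  let w : K →L[ℂ] H := x.toLinearMap.extendOfNorm e
  have hbd : ∃ C, ∀ k, ‖x.toLinearMap k‖ ≤ C * ‖e k‖ :=
    ⟨1, fun k => by rw [one_mul, Submodule.coe_norm, he, hnorm]; rfl⟩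
  have hw : ∀ k, w (e k) = x k := fun k => LinearMap.extendOfNorm_eq hdense hbd k
  have hwn : ∀ z, ‖w z‖ = ‖z‖ := by
    intro z
    refine hdense.induction_on z (isClosed_eq (by fun_prop) (by fun_prop)) ?_
    intro k
    rw [hw, Submodule.coe_norm, he, hnorm]
  let R : H →L[ℂ] H := K.starProjection
  let u : H →L[ℂ] H := w ∘L K.orthogonalProjectionOnto
  have hR_sa : star R = R := (isSelfAdjoint_starProjection K).star_eq
  have hRR : R * R = R := (isStarProjection_starProjection (U := K)).isIdempotentElem
  have hua : u * a = x := by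
    ext k
    have : K.orthogonalProjectionOnto (a k) = e k := by
      have := Submodule.orthogonalProjectionOnto_mem_subspace_eq_self (K := K) (e k)
      simpa [he] using this
    simp only [u, opmul_apply, comp_apply, this, hw]
  have hRa : R * a = a := by
    ext k
    exact Submodule.starProjection_eq_self_iff.2 (hmemK k)
  have haR : a * R = a := by
    have := congrArg star hRa
    rwa [star_mul, hR_sa, ha_sa] at this
  have huu : star u * u = R := by
    have : star u * u = star R * R := by
      apply star_mul_eq_of_norm
      intro k
      simp only [u, comp_apply, hwn]
      rfl
    rw [this, hR_sa, hRR]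
  have hR0 : ∀ k, a k = 0 → R k = 0 := by
    intro k hk
    rw [Submodule.starProjection_apply_eq_zero_iff]
    rw [Submodule.orthogonal_closure]
    rw [Submodule.mem_orthogonal]
    rintro _ ⟨m, rfl⟩
    rw [coe_coe, ← ha_sa, inner_star_left, hk, inner_zero_right]
  have huR : u * R = u := by
    ext k
    have h1 : ‖u (R k - k)‖ = ‖R (R k - k)‖ := by
      apply norm_eq_of_star_mul
      rw [huu, hR_sa, hRR]
    have h2 : R (R k - k) = 0 := by
      rw [map_sub, ← opmul_apply, hRR, sub_self]
    rw [h2, norm_zero, norm_eq_zero, map_sub, sub_eq_zero] at h1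
    exact h1
  have hRN : R ∈ N := by
    apply starProjection_mem
    intro c hc
    have : K ≤ K.comap c.toLinearMap := by
      apply Submodule.topologicalClosure_minimal
      · rintro _ ⟨m, rfl⟩
        rw [Submodule.mem_comap]
        have : c.toLinearMap (a.toLinearMap m) = a (c m) := commutes_of_mem haN hc m
        rw [this]
        exact hmemK _
      · exact hKc.preimage c.continuous
    exact this
  have huN : u ∈ N := by
    apply mem_of_commutes
    intro c hc k
    have key : ∀ z ∈ K, c (u z) = u (c z) := by
      have : K ≤ LinearMap.ker ((c * u - u * c : H →L[ℂ] H)).toLinearMap := by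
        apply Submodule.topologicalClosure_minimal
        · rintro _ ⟨m, rfl⟩
          rw [LinearMap.mem_ker]
          have h1 : u (a m) = x m := congrArg (fun f : H →L[ℂ] H => f m) hua
          have h2 : u (a (c m)) = x (c m) := congrArg (fun f : H →L[ℂ] H => f (c m)) hua
          simp only [coe_coe, sub_apply, opmul_apply]
          rw [h1, commutes_of_mem haN hc, h2, commutes_of_mem hx hc, sub_self]
        · exact (c * u - u * c).isClosed_ker
      intro z hz
      have := this hz
      rw [LinearMap.mem_ker] at this
      simpa [sub_eq_zero] using this
    have h1 : ∀ k, u (R k) = u k := fun k => congrArg (fun f : H →L[ℂ] H => f k) huR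
    rw [← h1 k, key _ (K.starProjection_apply_mem k), commutes_of_mem hRN hc, h1]
  refine ⟨u, huN, ?_, ?_, ?_, ?_, ?_⟩
  · rw [mul_assoc, huu, huR]
  · rw [huu, ← hua, mul_assoc, haR]
  · rw [← hua, mul_assoc, ← mul_assoc (star u), huu, hRa]
  · intro b hb
    ext k
    have h1 : x (b k) = 0 := congrArg (fun f : H →L[ℂ] H => f k) hb
    have h2 : R (b k) = 0 := by
      apply hR0
      rw [← norm_eq_zero, hnorm, h1, norm_zero]
    rw [← huR, opmul_apply, opmul_apply, h2, map_zero, zero_apply]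
  · intro b hb
    have h1 : a * (star u * b) = 0 := by
      rw [← hua, star_mul, ha_sa, mul_assoc] at hb
      exact hb
    have h2 : R * (star u * b) = 0 := by
      ext k
      exact hR0 _ (congrArg (fun f : H →L[ℂ] H => f k) h1)
    have h3 : R * star u = star u := by
      have := congrArg star huR
      rwa [star_mul, hR_sa] at this
    rwa [← mul_assoc, h3] at h2

theorem sum_pi_bound {ι : Type*} (u : ι → H →L[ℂ] H)
    (hpi : ∀ i, u i * star (u i) * u i = u i)
    (h1 : ∀ i j, i ≠ j → star (u i) * u j = 0)
    (h2 : ∀ i j, i ≠ j → u i * star (u j) = 0) (s : Finset ι) (h : H) :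
    ‖∑ i ∈ s, u i h‖ ≤ ‖h‖ := by
  classical
  set W : H →L[ℂ] H := ∑ i ∈ s, u i with hW
  have hWW : star W * W = ∑ i ∈ s, star (u i) * u i := by
    rw [hW, star_sum, Finset.sum_mul_sum]
    refine Finset.sum_congr rfl fun i hi => ?_
    rw [Finset.sum_eq_single i]
    · intro j _ hj; exact h1 i j (Ne.symm hj)
    · intro hh; exact absurd hi hh
  have hp : W * (star W * W) = W := by
    rw [hWW, hW, Finset.sum_mul_sum]
    refine Finset.sum_congr rfl fun i hi => ?_
    rw [Finset.sum_eq_single i]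
    · rw [← mul_assoc, hpi]
    · intro j _ hj; rw [← mul_assoc, h2 i j (Ne.symm hj), zero_mul]
    · intro hh; exact absurd hi hh
  have hproj : IsStarProjection (star W * W) :=
    ⟨by rw [IsIdempotentElem, mul_assoc, hp], IsSelfAdjoint.star_mul_self W⟩
  have hn : ‖star W * W‖ ≤ 1 := hproj.norm_le
  rw [CStarRing.norm_star_mul_self] at hn
  have hn' : ‖W‖ ≤ 1 := by nlinarith [norm_nonneg W]
  have : ∑ i ∈ s, u i h = W h := by rw [hW, sum_apply]
  rw [this]
  calc ‖W h‖ ≤ ‖W‖ * ‖h‖ := W.le_opNorm h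
    _ ≤ 1 * ‖h‖ := by gcongr
    _ = ‖h‖ := one_mul _

theorem summable_pi {ι : Type*} (u : ι → H →L[ℂ] H)
    (hpi : ∀ i, u i * star (u i) * u i = u i)
    (h1 : ∀ i j, i ≠ j → star (u i) * u j = 0)
    (h2 : ∀ i j, i ≠ j → u i * star (u j) = 0) (h : H) :
    Summable (fun i => u i h) := by
  classical
  let V : ∀ i, (LinearMap.range (u i).toLinearMap) →ₗᵢ[ℂ] H :=
    fun i => (LinearMap.range (u i).toLinearMap).subtypeₗᵢ
  have hV : OrthogonalFamily ℂ (fun i => LinearMap.range (u i).toLinearMap) V := by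
    rintro i j hij ⟨_, a, rfl⟩ ⟨_, b, rfl⟩
    change inner ℂ (u i a) (u j b) = 0
    rw [← inner_star_right, ← opmul_apply, h1 i j hij, zero_apply, inner_zero_right]
  let f : ∀ i, LinearMap.range (u i).toLinearMap := fun i => ⟨u i h, h, rfl⟩
  have key := (hV.summable_iff_norm_sq_summable f).2
  apply key
  refine summable_of_sum_le (c := ‖h‖^2) (fun i => by positivity) ?_
  intro s
  rw [← hV.norm_sum f s]
  have := sum_pi_bound u hpi h1 h2 s h
  have h3 : ∑ i ∈ s, V i (f i) = ∑ i ∈ s, u i h := rfl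
  rw [h3]
  gcongr

theorem exists_sum_aux {ι : Type*} (u : ι → H →L[ℂ] H)
    (hpi : ∀ i, u i * star (u i) * u i = u i)
    (h1 : ∀ i j, i ≠ j → star (u i) * u j = 0)
    (h2 : ∀ i j, i ≠ j → u i * star (u j) = 0) :
    ∃ U : H →L[ℂ] H, ∀ h, HasSum (fun i => u i h) (U h) := by
  have hs := summable_pi u hpi h1 h2
  let L : H →ₗ[ℂ] H :=
    { toFun := fun h => ∑' i, u i h
      map_add' := fun a b => by
        simp only [map_add]
        exact (hs a).tsum_add (hs b)
      map_smul' := fun c a => by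
        simp only [map_smul, RingHom.id_apply]
        exact (hs a).tsum_const_smul c }
  refine ⟨L.mkContinuous 1 ?_, fun h => (hs h).hasSum⟩
  intro h
  rw [one_mul]
  refine le_of_tendsto (hs h).hasSum.norm ?_
  exact Filter.Eventually.of_forall fun s => sum_pi_bound u hpi h1 h2 s h

theorem exists_sum (N : VonNeumannAlgebra H) {ι : Type*} (u : ι → H →L[ℂ] H)
    (hu : ∀ i, u i ∈ N)
    (hpi : ∀ i, u i * star (u i) * u i = u i)
    (h1 : ∀ i j, i ≠ j → star (u i) * u j = 0)
    (h2 : ∀ i j, i ≠ j → u i * star (u j) = 0) :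
    ∃ U ∈ N, U * star U * U = U ∧
      (∀ i, u i * star (u i) * U = u i) ∧ (∀ i, U * (star (u i) * u i) = u i) ∧
      (∀ a : H →L[ℂ] H, (∀ i, a * u i = 0) → a * U = 0) ∧
      (∀ a : H →L[ℂ] H, (∀ i, u i * a = 0) → U * a = 0) := by
  classical
  obtain ⟨U, hU⟩ := exists_sum_aux u hpi h1 h2
  have z1 : ∀ a : H →L[ℂ] H, (∀ i, a * u i = 0) → a * U = 0 := by
    intro a ha
    ext k
    have h3 := (hU k).mapL a
    have h4 : (fun i => a (u i k)) = fun _ => 0 := by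
      funext i
      exact congrArg (fun f : H →L[ℂ] H => f k) (ha i)
    rw [h4] at h3
    exact h3.unique hasSum_zero
  have z2 : ∀ a : H →L[ℂ] H, (∀ i, u i * a = 0) → U * a = 0 := by
    intro a ha
    ext k
    have h3 := hU (a k)
    have h4 : (fun i => (u i (a k))) = fun _ => 0 := by
      funext i
      exact congrArg (fun f : H →L[ℂ] H => f k) (ha i)
    rw [h4] at h3
    exact h3.unique hasSum_zero
  have l1 : ∀ i, u i * star (u i) * U = u i := by
    intro i
    ext k
    have h3 := (hU k).mapL (u i * star (u i))
    refine h3.unique ?_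
    have h4 := hasSum_ite_eq i (u i k)
    convert h4 using 1
    funext j
    split_ifs with hj
    · subst hj
      exact congrArg (fun f : H →L[ℂ] H => f k) (hpi j)
    · rw [← opmul_apply, mul_assoc, h1 i j (Ne.symm hj), mul_zero, zero_apply]
  have l2 : ∀ i, U * (star (u i) * u i) = u i := by
    intro i
    ext k
    have h3 := hU ((star (u i) * u i) k)
    refine h3.unique ?_
    have h4 := hasSum_ite_eq i (u i k)
    convert h4 using 1
    funext j
    split_ifs with hj
    · subst hj
      rw [← opmul_apply, ← mul_assoc, hpi j]
    · rw [← opmul_apply, ← mul_assoc, h2 j i hj, zero_mul, zero_apply]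
  refine ⟨U, ?_, ?_, l1, l2, z1, z2⟩
  · apply mem_of_commutes
    intro c hc k
    have h3 := (hU k).mapL c
    have h4 : (fun i => c (u i k)) = fun i => u i (c k) := by
      funext i
      exact commutes_of_mem (hu i) hc k
    rw [h4] at h3
    exact h3.unique (hU (c k))
  · have : (U * star U - 1) * U = 0 := by
      apply z1
      intro i
      have h3 : star U * u i = star (u i) * u i := by
        have h4 := congrArg star (l1 i)
        simp only [star_mul, star_star] at h4
        conv_lhs => rw [← hpi i, ← mul_assoc, h4]
      rw [sub_mul, one_mul, mul_assoc, h3, l2, sub_self]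
    rwa [sub_mul, one_mul, sub_eq_zero] at this

theorem star_zero_of {x y : H →L[ℂ] H} (h : x * y = 0) : star y * star x = 0 := by
  rw [← star_mul, h, star_zero]

theorem star_fix_right {x p : H →L[ℂ] H} (hp : star p = p) (h : x * p = x) :
    p * star x = star x := by
  have := congrArg star h
  rwa [star_mul, hp] at this

theorem star_fix_left {x p : H →L[ℂ] H} (hp : star p = p) (h : p * x = x) :
    star x * p = star x := by
  have := congrArg star h
  rwa [star_mul, hp] at this

/-- The central separating projection. -/
theorem exists_central (N : VonNeumannAlgebra H) (A B : H →L[ℂ] H) (hA : A ∈ N)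
    (h : ∀ y ∈ N, A * y * B = 0) :
    ∃ P ∈ N, P * P = P ∧ star P = P ∧ (∀ y ∈ N, P * y = y * P) ∧
      A * P = 0 ∧ P * B = B := by
  let K : Submodule ℂ H := ⨅ y : N, LinearMap.ker (A * (y : H →L[ℂ] H)).toLinearMap
  have hK : ∀ k, k ∈ K ↔ ∀ y ∈ N, A (y k) = 0 := by
    intro k
    simp only [K, Submodule.mem_iInf, LinearMap.mem_ker, Subtype.forall]
    rfl
  have hKc : IsClosed (K : Set H) := by
    have : (K : Set H) = ⋂ y : N, (LinearMap.ker (A * (y : H →L[ℂ] H)).toLinearMap : Set H) := by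
      simp only [K, Submodule.coe_iInf]
    rw [this]
    exact isClosed_iInter fun y => (A * (y : H →L[ℂ] H)).isClosed_ker
  have : CompleteSpace K := hKc.completeSpace_coe
  have hPN : K.starProjection ∈ N := by
    apply starProjection_mem
    intro c hc k hk
    rw [hK] at hk ⊢
    intro y hy
    rw [← commutes_of_mem hy hc, ← commutes_of_mem hA hc, hk y hy, map_zero]
  have hPN' : K.starProjection ∈ N.commutant := by
    apply starProjection_mem
    intro c hc k hk
    rw [VonNeumannAlgebra.commutant_commutant] at hc
    rw [hK] at hk ⊢
    intro y hy
    exact hk (y * c) (mul_mem hy hc)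
  refine ⟨K.starProjection, hPN, (isStarProjection_starProjection (U := K)).isIdempotentElem,
    (isSelfAdjoint_starProjection K).star_eq, ?_, ?_, ?_⟩
  · intro y hy
    exact (VonNeumannAlgebra.mem_commutant_iff.1 hPN' y hy).symm
  · ext k
    exact (hK _).1 (K.starProjection_apply_mem k) 1 (one_mem N)
  · ext k
    apply Submodule.starProjection_eq_self_iff.2
    rw [hK]
    intro y hy
    exact congrArg (fun f : H →L[ℂ] H => f k) (h y hy)

/-- Generalized comparability. -/
theorem comparison (N : VonNeumannAlgebra H) (A B : H →L[ℂ] H)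
    (hA : IsProjIn N A) (hB : IsProjIn N B) :
    ∃ c ∈ N, ∃ P ∈ N, c * star c * c = c ∧ c * A = c ∧ B * c = c ∧
      P * P = P ∧ star P = P ∧ (∀ y ∈ N, P * y = y * P) ∧
      P * A = P * (star c * c) ∧ (1 - P) * B = (1 - P) * (c * star c) := by
  classical
  obtain ⟨hAN, hAA, hAs⟩ := hA
  obtain ⟨hBN, hBB, hBs⟩ := hB
  let good : Set (Set (H →L[ℂ] H)) := {S | (∀ u ∈ S, u ∈ N ∧ u * star u * u = u ∧ u * A = u ∧
    B * u = u) ∧ ∀ u ∈ S, ∀ w ∈ S, u ≠ w → star u * w = 0 ∧ u * star w = 0}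
  obtain ⟨S, hS⟩ : ∃ S, Maximal (· ∈ good) S := by
    apply zorn_subset
    intro C hC hchain
    refine ⟨⋃₀ C, ⟨?_, ?_⟩, fun s hs => Set.subset_sUnion_of_mem hs⟩
    · rintro u ⟨s, hs, hu⟩
      exact (hC hs).1 u hu
    · rintro u ⟨s, hs, hu⟩ w ⟨t, ht, hw⟩ huw
      rcases hchain.total hs ht with hst | hts
      · exact (hC ht).2 u (hst hu) w hw huw
      · exact (hC hs).2 u hu w (hts hw) huw
  obtain ⟨⟨hS1, hS2⟩, hmax⟩ := hS
  obtain ⟨U, hUN, hUpi, l1, l2, z1, z2⟩ := exists_sum N (fun u : S => (u : H →L[ℂ] H))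
    (fun u => (hS1 u u.2).1) (fun u => (hS1 u u.2).2.1)
    (fun u w h => (hS2 u u.2 w w.2 (fun h' => h (Subtype.ext h'))).1)
    (fun u w h => (hS2 u u.2 w w.2 (fun h' => h (Subtype.ext h'))).2)
  have hUA : U * A = U := by
    have : U * (A - 1) = 0 := z2 _ fun u => by
      rw [mul_sub, mul_one, (hS1 u u.2).2.2.1, sub_self]
    rwa [mul_sub, mul_one, sub_eq_zero] at this
  have hBU : B * U = U := by
    have : (B - 1) * U = 0 := z1 _ fun u => by
      rw [sub_mul, one_mul, (hS1 u u.2).2.2.2, sub_self]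
    rwa [sub_mul, one_mul, sub_eq_zero] at this
  have hsU := star_mem hUN
  set A' := A - star U * U with hA'
  set B' := B - U * star U with hB'
  have hA's : star A' = A' := by rw [hA', star_sub, star_mul, star_star, hAs]
  have hB's : star B' = B' := by rw [hB', star_sub, star_mul, star_star, hBs]
  have hA'N : A' ∈ N := sub_mem hAN (mul_mem hsU hUN)
  have hB'N : B' ∈ N := sub_mem hBN (mul_mem hUN hsU)
  have hA'A : A' * A = A' := by rw [hA', sub_mul, hAA, mul_assoc, hUA]
  have hBB' : B * B' = B' := by rw [hB', mul_sub, hBB, ← mul_assoc, hBU]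
  have hB'B : B' * B = B' := by simpa [hB's] using star_fix_left hBs hBB'
  have hUA' : ∀ u ∈ S, u * A' = 0 := by
    intro u hu
    have h1 : u * star u * U = u := l1 ⟨u, hu⟩
    have h2 : u * (star U * U) = u := by
      conv_lhs => rw [← h1]
      rw [mul_assoc, ← mul_assoc U, hUpi, h1]
    rw [hA', mul_sub, h2, (hS1 u hu).2.2.1, sub_self]
  have hB'U : ∀ u ∈ S, B' * u = 0 := by
    intro u hu
    have h1 : U * (star u * u) = u := l2 ⟨u, hu⟩
    have h2 : (U * star U) * u = u := by
      conv_lhs => rw [← h1]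
      rw [← mul_assoc, hUpi, h1]
    rw [hB', sub_mul, h2, (hS1 u hu).2.2.2, sub_self]
  have hzero : ∀ y ∈ N, B' * y * A' = 0 := by
    intro y hy
    by_contra hne
    obtain ⟨w, hwN, hwpi, hxw, hwx, k1, k2⟩ :=
      exists_polar N (mul_mem (mul_mem hB'N hy) hA'N)
    have hwS : ∀ u ∈ S, w * star u = 0 := by
      intro u hu
      apply k1
      have := star_zero_of (hUA' u hu)
      rw [hA's] at this
      rw [mul_assoc, this, mul_zero]
    have hwS' : ∀ u ∈ S, star w * u = 0 := by
      intro u hu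
      apply k2
      simp only [star_mul, hB's]
      rw [mul_assoc, mul_assoc, hB'U u hu, mul_zero, mul_zero]
    have hwA : w * A = w := by
      have : w * (A - 1) = 0 := k1 _ (by
        rw [mul_sub, mul_one, mul_assoc, hA'A, sub_self])
      rwa [mul_sub, mul_one, sub_eq_zero] at this
    have hBw : B * w = w := by
      have : star w * (B - 1) = 0 := k2 _ (by
        simp only [star_mul, hB's]
        rw [mul_sub, mul_one, mul_assoc, mul_assoc, hB'B, sub_self])
      have := star_zero_of this
      rwa [star_star, star_sub, star_one, hBs, sub_mul, one_mul, sub_eq_zero] at this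
    have hins : insert w S ∈ good := by
      refine ⟨?_, ?_⟩
      · rintro u (rfl | hu)
        · exact ⟨hwN, hwpi, hwA, hBw⟩
        · exact hS1 u hu
      · rintro u (rfl | hu) v (rfl | hv) huv
        · exact absurd rfl huv
        · exact ⟨hwS' v hv, hwS v hv⟩
        · refine ⟨?_, ?_⟩
          · simpa using star_zero_of (hwS' u hu)
          · simpa using star_zero_of (hwS u hu)
        · exact hS2 u hu v hv huv
    have hwmem : w ∈ S := hmax hins (Set.subset_insert _ _) (Set.mem_insert _ _)
    have hw0 : w = 0 := by
      rw [← hwpi, hwS w hwmem, zero_mul]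
    apply hne
    rw [← hwx, hw0, zero_mul, zero_mul]
  obtain ⟨P, hPN, hPP, hPs, hPc, hAP, hPB⟩ := exists_central N A' B' hA'N (by
    intro y hy
    have := star_zero_of (hzero (star y) (star_mem hy))
    simpa only [star_mul, star_star, hA's, hB's, mul_assoc] using this)
  refine ⟨U, hUN, P, hPN, hUpi, hUA, hBU, hPP, hPs, hPc, ?_, ?_⟩
  · have : P * A' = 0 := by rw [hPc _ hA'N, hAP]
    rwa [hA', mul_sub, sub_eq_zero] at this
  · have : (1 - P) * B' = 0 := by rw [sub_mul, one_mul, hPB, sub_self]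
    rwa [hB', mul_sub, sub_eq_zero] at this

theorem reas {x y z : H →L[ℂ] H} (h : x * y = z) (t : H →L[ℂ] H) : x * (y * t) = z * t := by
  rw [← mul_assoc, h]

theorem pi_right {v p : H →L[ℂ] H} (h : star v * v = p) (hp : p * p = p) : v * p = v := by
  have hs : star p = p := by rw [← h, star_mul, star_star]
  have : star (v * p - v) * (v * p - v) = 0 := by
    simp only [star_sub, star_mul, hs, mul_sub, sub_mul, mul_assoc, reas h, h, hp]
    abel
  rwa [CStarRing.star_mul_self_eq_zero_iff, sub_eq_zero] at this

theorem pi_left {v p : H →L[ℂ] H} (h : star v * v * (star v * v) = star v * v) (hs : star p = p)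
    (h2 : v * star v * p = v * star v) : p * v = v := by
  have h3 := congrArg star h2
  simp only [star_mul, star_star, hs] at h3
  have h4 := pi_right rfl h
  rw [← h4, ← mul_assoc v, ← mul_assoc p, h3]

/-- A projection subequivalent to a finite projection is finite. -/
theorem finite_of_le {N : VonNeumannAlgebra H} {w p q : H →L[ℂ] H} (hw : w ∈ N)
    (hp : IsProjIn N p) (hwp : star w * w = p) (hqw : q * w = w) (hq : IsFiniteProjIn N q) :
    IsFiniteProjIn N p := by
  refine ⟨hp, ?_⟩
  intro v hv hvp hvv
  obtain ⟨hpN, hpp, hps⟩ := hp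
  obtain ⟨⟨hqN, hqq, hqs⟩, hq⟩ := hq
  have wp : w * p = w := pi_right hwp hpp
  have pw : p * star w = star w := star_fix_right hps wp
  have wq : star w * q = star w := star_fix_left hqs hqw
  have vp : v * p = v := pi_right hvp hpp
  have pvs : p * star v = star v := star_fix_right hps vp
  have pv : p * v = v := pi_left (by rw [hvp, hpp]) hps hvv
  have vsp : star v * p = star v := star_fix_left hps pv
  have key := hq (w * v * star w + (q - w * star w))
    (add_mem (mul_mem (mul_mem hw hv) (star_mem hw)) (sub_mem hqN (mul_mem hw (star_mem hw))))
    (by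
      simp only [star_add, star_sub, star_mul, star_star, hqs, mul_add, add_mul, mul_sub, sub_mul,
        mul_assoc, hwp, reas hwp, hqw, reas hqw, wq, reas wq, hqq, pw, reas pw, hvp, reas hvp,
        reas pv, reas vsp]
      abel)
    (by
      simp only [star_add, star_sub, star_mul, star_star, hqs, mul_add, add_mul, mul_sub, sub_mul,
        mul_assoc, hwp, reas hwp, hqw, reas hqw, wq, reas wq, hqq, pw, reas pw, reas pv, reas pvs])
  have key2 : w * (v * star v) * star w = w * star w := by
    simp only [star_add, star_sub, star_mul, star_star, hqs, mul_add, add_mul, mul_sub, sub_mul,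
        mul_assoc, hwp, reas hwp, hqw, reas hqw, wq, reas wq, hqq, pw, reas pw, reas pv, reas pvs]
      at key
    simp only [mul_assoc]
    have h5 : w * (v * (star v * star w)) - w * star w = 0 := by
      rw [← sub_eq_zero] at key
      rw [← key]; abel
    exact sub_eq_zero.1 h5
  have key3 := congrArg (fun z => star w * z * w) key2
  simp only [mul_assoc, hwp, reas hwp, vsp, reas vsp, pv, reas pv, hpp, pvs, reas pvs] at key3
  exact key3

theorem finite_sub {N : VonNeumannAlgebra H} {p q : H →L[ℂ] H} (hp : IsProjIn N p)
    (hqp : q * p = p) (hq : IsFiniteProjIn N q) : IsFiniteProjIn N p :=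
  finite_of_le hp.1 hp (by rw [hp.2.2, hp.2.1]) hqp hq

theorem fix_of_sub_right {w p : H →L[ℂ] H} (h : w * (1 - p) = 0) : w * p = w := by
  rw [mul_sub, mul_one, sub_eq_zero] at h
  exact h.symm

theorem fix_of_sub_left {w p : H →L[ℂ] H} (h : (1 - p) * w = 0) : p * w = w := by
  rw [sub_mul, one_mul, sub_eq_zero] at h
  exact h.symm

/-- Splitting of a projection `G` relative to `E` (Kaplansky). -/
theorem split_proj {N : VonNeumannAlgebra H} {E G : H →L[ℂ] H} (hE : IsProjIn N E)
    (hG : IsProjIn N G) :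
    ∃ a ∈ N, a * star a * a = a ∧ IsProjIn N (star a * a) ∧ a * G = a ∧ E * a = 0 ∧
      IsProjIn N (G - star a * a) ∧ E * (G - star a * a) = G - star a * a ∧
      (∀ R : H →L[ℂ] H, R * (1 - E) * G = 0 → R * a = 0) ∧
      (a * star a * ((1 - E) * G) = (1 - E) * G) := by
  obtain ⟨hEN, hEE, hEs⟩ := hE
  obtain ⟨hGN, hGG, hGs⟩ := hG
  obtain ⟨a, haN, hapi, hxa, hax, k1, k2⟩ :=
    exists_polar N (mul_mem (sub_mem (one_mem N) hEN) hGN)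
  have haN' := star_mem haN
  have hp : IsProjIn N (star a * a) := by
    refine ⟨mul_mem haN' haN, ?_, by rw [star_mul, star_star]⟩
    rw [mul_assoc, ← mul_assoc a, hapi]
  have haG : a * G = a := fix_of_sub_right (k1 _ (by
    simp only [mul_sub, mul_one, mul_assoc, hGG, sub_self]))
  have hGa : G * star a = star a := star_fix_right hGs haG
  have hR : ∀ R : H →L[ℂ] H, R * (1 - E) * G = 0 → R * a = 0 := by
    intro R hR
    have h1 := k2 (star R) (by
      rw [← star_mul, ← mul_assoc, hR, star_zero])
    simpa using star_zero_of h1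
  have hEa : E * a = 0 := hR E (by rw [mul_sub, mul_one, hEE, sub_self, zero_mul])
  refine ⟨a, haN, hapi, hp, haG, hEa, ⟨sub_mem hGN hp.1, ?_, ?_⟩, ?_, hR, hax⟩
  · have h1 : a * (star a * a) = a := by rw [← mul_assoc, hapi]
    simp only [mul_sub, sub_mul, mul_assoc, hGG, reas hGa, haG, h1]
    abel
  · rw [star_sub, star_mul, star_star, hGs]
  · apply fix_of_sub_left
    rw [mul_assoc] at hxa
    have h1 : G * (star a * a) = star a * a := by rw [← mul_assoc, hGa]
    rw [h1] at hxa
    rw [mul_sub, hxa, sub_self]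

theorem shift_sum (N : VonNeumannAlgebra H) (w : ℕ → H →L[ℂ] H) (D : H →L[ℂ] H)
    (hwN : ∀ n, w n ∈ N) (hwD : ∀ n, w n * D = w n) (hD : star D = D)
    (h1 : ∀ n, star (w n) * w n = D) (h2 : ∀ m n, m ≠ n → star (w m) * w n = 0)
    (f : ℕ → ℕ) (hf : Function.Injective f) :
    ∃ U ∈ N, U * star U * U = U ∧
      (∀ a : H →L[ℂ] H, (∀ i, a * (w (f i) * star (w i)) = 0) → a * U = 0) ∧
      (∀ a : H →L[ℂ] H, (∀ i, star (w i) * a = 0) → U * a = 0) ∧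
      (∀ a : H →L[ℂ] H, U * a = 0 → ∀ i, star (w i) * a = 0) := by
  have hDw : ∀ n, D * star (w n) = star (w n) := fun n => star_fix_right hD (hwD n)
  obtain ⟨U, hUN, hpi, l1, l2, z1, z2⟩ := exists_sum N (fun n => w (f n) * star (w n))
    (fun n => mul_mem (hwN _) (star_mem (hwN n)))
    (fun n => by
      simp only [star_mul, star_star, mul_assoc, reas (h1 n), reas (h1 (f n)), hDw, reas (hDw n)])
    (fun m n hmn => by
      simp only [star_mul, star_star, mul_assoc, reas (h2 (f m) (f n) (fun h => hmn (hf h))),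
        zero_mul, mul_zero])
    (fun m n hmn => by
      simp only [star_mul, star_star, mul_assoc, reas (h2 m n hmn), zero_mul, mul_zero])
  refine ⟨U, hUN, hpi, z1, ?_, ?_⟩
  · intro a ha
    apply z2
    intro i
    rw [mul_assoc, ha, mul_zero]
  · intro a ha i
    have h3 : w (f i) * star (w i) * a = 0 := by
      rw [← l1 i, mul_assoc, ha, mul_zero]
    have h4 : star (w (f i)) * (w (f i) * star (w i) * a) = 0 := by rw [h3, mul_zero]
    simpa only [mul_assoc, reas (h1 (f i)), reas (hDw i)] using h4

theorem halving {N : VonNeumannAlgebra H} {v I : H →L[ℂ] H} (hI : IsProjIn N I) (hv : v ∈ N)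
    (hvI : star v * v = I) (hvv : v * star v * I = v * star v) (hne : v * star v ≠ I) :
    ∃ Q, IsProjIn N Q ∧ Q ≠ 0 ∧ I * Q = Q ∧ ∃ u₀ ∈ N, ∃ u₁ ∈ N, star u₀ * u₀ = Q ∧
      star u₁ * u₁ = Q ∧ Q * u₀ = u₀ ∧ Q * u₁ = u₁ ∧ star u₀ * u₁ = 0 := by
  obtain ⟨hIN, hII, hIs⟩ := hI
  have vI : v * I = v := pi_right hvI hII
  have Iv : I * v = v := pi_left (by rw [hvI, hII]) hIs hvv
  have vsI : star v * I = star v := star_fix_left hIs Iv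
  have Ivs : I * star v = star v := star_fix_right hIs vI
  set D := I - v * star v with hD
  have hDs : star D = D := by rw [hD, star_sub, star_mul, star_star, hIs]
  have hDv : D * v = 0 := by rw [hD, sub_mul, Iv, mul_assoc, hvI, vI, sub_self]
  have hDI : D * I = D := by rw [hD, sub_mul, hII, mul_assoc, vsI]
  have hID : I * D = D := by rw [hD, mul_sub, hII, ← mul_assoc, Iv]
  have hDD : D * D = D := by
    conv_lhs => rw [hD]
    rw [sub_mul, hID, mul_assoc]
    have := star_zero_of hDv
    rw [hDs] at this
    rw [this, mul_zero, sub_zero]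
  have hDN : D ∈ N := sub_mem hIN (mul_mem hv (star_mem hv))
  have hD0 : D ≠ 0 := fun h => hne (sub_eq_zero.1 h).symm
  let w : ℕ → H →L[ℂ] H := fun n => v ^ n * D
  have w0 : w 0 = D := by simp [w]
  have ws : ∀ n, w (n + 1) = v * w n := fun n => by simp only [w, pow_succ', mul_assoc]
  have hIw : ∀ n, I * w n = w n := by
    intro n
    cases n with
    | zero => rw [w0, hID]
    | succ n => rw [ws, ← mul_assoc, Iv]
  have hwN : ∀ n, w n ∈ N := fun n => mul_mem (pow_mem hv n) hDN
  have hwD : ∀ n, w n * D = w n := fun n => by simp only [w, mul_assoc, hDD]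
  have hss : ∀ m n, star (w (m + 1)) * w (n + 1) = star (w m) * w n := by
    intro m n
    rw [ws, ws, star_mul, mul_assoc, reas hvI, hIw]
  have h1 : ∀ n, star (w n) * w n = D := by
    intro n
    induction n with
    | zero => rw [w0, hDs, hDD]
    | succ n ih => rw [hss, ih]
  have h2' : ∀ m n, star (w m) * w (m + n + 1) = 0 := by
    intro m n
    induction m with
    | zero => rw [w0, hDs, ws, reas hDv, zero_mul]
    | succ m ih => rw [show m + 1 + n + 1 = (m + n + 1) + 1 by ring, hss, ih]
  have h2 : ∀ m n, m ≠ n → star (w m) * w n = 0 := by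
    intro m n hmn
    rcases lt_or_gt_of_ne hmn with h | h
    · obtain ⟨k, rfl⟩ := Nat.exists_eq_add_of_lt h
      exact h2' m k
    · obtain ⟨k, rfl⟩ := Nat.exists_eq_add_of_lt h
      simpa using star_zero_of (h2' n k)
  obtain ⟨U, hUN, hUpi, a1, a2, a3⟩ := shift_sum N w D hwN hwD hDs h1 h2 (fun n => 2 * n)
    (fun a b h => by simpa using h)
  obtain ⟨V, hVN, hVpi, b1, b2, b3⟩ := shift_sum N w D hwN hwD hDs h1 h2 (fun n => 2 * n + 1)
    (fun a b h => by simpa using h)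
  have hU' : U * (1 - star U * U) = 0 := by
    rw [mul_sub, mul_one, ← mul_assoc, hUpi, sub_self]
  have hV' : V * (1 - star V * V) = 0 := by
    rw [mul_sub, mul_one, ← mul_assoc, hVpi, sub_self]
  have hwU := a3 _ hU'
  have hwV := b3 _ hV'
  have hUV : star U * U = star V * V := by
    have e1 : V * (star U * U) = V := fix_of_sub_right (b2 _ hwU)
    have e2 : U * (star V * V) = U := fix_of_sub_right (a2 _ hwV)
    have e3 : (star V * V) * (star U * U) = star V * V := by rw [mul_assoc, e1]
    have e4 : (star U * U) * (star V * V) = star U * U := by rw [mul_assoc, e2]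
    have e5 := congrArg star e3
    simp only [star_mul, star_star] at e5
    rw [← e5, e4]
  have hQs : star (star U * U) = star U * U := by rw [star_mul, star_star]
  have hQw : ∀ n, (1 - star U * U) * w n = 0 := by
    intro n
    have := star_zero_of (hwU n)
    rwa [star_sub, star_one, hQs, star_star] at this
  refine ⟨star U * U, ⟨mul_mem (star_mem hUN) hUN, ?_, hQs⟩, ?_, ?_, U, hUN, V, hVN, rfl,
    hUV.symm, ?_, ?_, ?_⟩
  · rw [mul_assoc, ← mul_assoc U, hUpi]
  · intro h0
    have hU0 : U = 0 := (CStarRing.star_mul_self_eq_zero_iff U).1 h0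
    have := a3 1 (by rw [hU0, zero_mul]) 0
    rw [w0, mul_one, hDs] at this
    exact hD0 this
  · have : U * I = U := by
      apply fix_of_sub_right
      apply a2
      intro i
      have := star_fix_left hIs (hIw i)
      rw [mul_sub, mul_one, this, sub_self]
    rw [← mul_assoc, star_fix_right hIs this]
  · apply fix_of_sub_left
    apply a1
    intro i
    rw [← mul_assoc, hQw, zero_mul]
  · apply fix_of_sub_left
    apply b1
    intro i
    rw [← mul_assoc, hQw, zero_mul]
  · apply b1
    intro i
    have : star (w (2 * i + 1)) * U = 0 := by
      apply a1
      intro j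
      rw [← mul_assoc, h2 _ _ (by omega), zero_mul]
    have := star_zero_of this
    rw [star_star] at this
    rw [← mul_assoc, this, zero_mul]

/-- The sum of two orthogonal finite projections is finite. -/
theorem finite_add {N : VonNeumannAlgebra H} {E F : H →L[ℂ] H} (hE : IsFiniteProjIn N E)
    (hF : IsFiniteProjIn N F) (hEF : E * F = 0) : IsFiniteProjIn N (E + F) := by
  obtain ⟨hEN, hEE, hEs⟩ := hE.1
  obtain ⟨hFN, hFF, hFs⟩ := hF.1
  have hFE : F * E = 0 := by
    have := star_zero_of hEF
    rwa [hEs, hFs] at this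
  have hI : IsProjIn N (E + F) := by
    refine ⟨add_mem hEN hFN, ?_, by rw [star_add, hEs, hFs]⟩
    simp only [mul_add, add_mul, hEE, hFF, hEF, hFE, add_zero, zero_add]
  refine ⟨hI, ?_⟩
  intro v hv hvI hvv
  by_contra hne
  obtain ⟨Q, hQ, hQ0, hIQ, u₀, hu₀, u₁, hu₁, hu₀Q, hu₁Q, hQu₀, hQu₁, h01⟩ :=
    halving hI hv hvI hvv hne
  obtain ⟨hQN, hQQ, hQs⟩ := id hQ
  -- split `Q` into two finite pieces
  obtain ⟨a₀, ha₀N, ha₀pi, ha₀p, ha₀Q, hEa₀, hE₁, hEE₁, hR₀, -⟩ := split_proj hE.1 hQ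
  set F₁ := star a₀ * a₀ with hF₁
  set E₁ := Q - F₁ with hE₁def
  have hFa₀ : F * a₀ = a₀ := by
    have : (1 - (E + F)) * a₀ = 0 := hR₀ _ (by
      simp only [mul_sub, sub_mul, mul_add, add_mul, one_mul, mul_one, hEE, hFE, add_zero]
      simp only [add_mul] at hIQ
      rw [← hIQ]
      simp only [mul_add, reas hEE, reas hEF, hEE, zero_mul, add_zero, reas hFE, reas hFF]
      abel)
    have := fix_of_sub_left this
    rwa [add_mul, hEa₀, zero_add] at this
  have hE₁f : IsFiniteProjIn N E₁ := finite_sub hE₁ hEE₁ hE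
  have hF₁f : IsFiniteProjIn N F₁ := finite_of_le ha₀N ha₀p rfl hFa₀ hF
  obtain ⟨hE₁N, hE₁E₁, hE₁s⟩ := id hE₁
  obtain ⟨hF₁N, hF₁F₁, hF₁s⟩ := id ha₀p
  have hF₁Q : F₁ * Q = F₁ := by rw [hF₁, mul_assoc, ha₀Q]
  have hQF₁ : Q * F₁ = F₁ := by simpa [hF₁s] using star_fix_right hQs hF₁Q
  have hE₁Q : E₁ * Q = E₁ := by rw [hE₁def, sub_mul, hQQ, hF₁Q]
  have hQE₁ : Q * E₁ = E₁ := by rw [hE₁def, mul_sub, hQQ, hQF₁]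
  have hF₁E₁ : F₁ = Q - E₁ := by rw [hE₁def]; abel
  -- the halves
  set G := u₀ * star u₀ with hGdef
  have u₀Q : u₀ * Q = u₀ := pi_right hu₀Q hQQ
  have u₁Q : u₁ * Q = u₁ := pi_right hu₁Q hQQ
  have Qu₀s : Q * star u₀ = star u₀ := star_fix_right hQs u₀Q
  have Qu₁s : Q * star u₁ = star u₁ := star_fix_right hQs u₁Q
  have u₀sQ : star u₀ * Q = star u₀ := star_fix_left hQs hQu₀
  have h10 : star u₁ * u₀ = 0 := by simpa using star_zero_of h01
  have hG : IsProjIn N G := by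
    refine ⟨mul_mem hu₀ (star_mem hu₀), ?_, by rw [hGdef, star_mul, star_star]⟩
    simp only [hGdef, mul_assoc, reas hu₀Q, Qu₀s]
  obtain ⟨hGN, hGG, hGs⟩ := id hG
  have hQG : Q * G = G := by rw [hGdef, ← mul_assoc, hQu₀]
  have hGQ : G * Q = G := by rw [hGdef, mul_assoc, u₀sQ]
  have hGu₀ : G * u₀ = u₀ := by rw [hGdef, mul_assoc, hu₀Q, u₀Q]
  have hGu₁ : G * u₁ = 0 := by rw [hGdef, mul_assoc, h01, mul_zero]
  set G' := Q - G with hG'def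
  have hG' : IsProjIn N G' := by
    refine ⟨sub_mem hQN hGN, ?_, by rw [hG'def, star_sub, hQs, hGs]⟩
    simp only [hG'def, mul_sub, sub_mul, hQQ, hQG, hGQ, hGG, sub_self, sub_zero]
  obtain ⟨hG'N, hG'G', hG's⟩ := id hG'
  have hG'G : G' * G = 0 := by rw [hG'def, sub_mul, hQG, hGG, sub_self]
  have hGG' : G * G' = 0 := by rw [hG'def, mul_sub, hGQ, hGG, sub_self]
  have hG'u₁ : G' * u₁ = u₁ := by rw [hG'def, sub_mul, hQu₁, hGu₁, sub_zero]
  have hG'u₀ : G' * u₀ = 0 := by rw [hG'def, sub_mul, hQu₀, hGu₀, sub_self]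
  have hQG' : Q * G' = G' := by rw [hG'def, mul_sub, hQQ, hQG]
  -- relative positions
  obtain ⟨a, haN, hapi, hap, haG, hE₁a, hA, hE₁A, hRa, -⟩ := split_proj hE₁ hG
  set A := G - star a * a with hAdef
  obtain ⟨b, hbN, hbpi, hbp, hbG', hF₁b, hB, hF₁B, hRb, -⟩ := split_proj ha₀p hG'
  set B := G' - star b * b with hBdef
  obtain ⟨hAN, hAA, hAs⟩ := id hA
  obtain ⟨hBN, hBB, hBs⟩ := id hB
  have hGas : G * star a = star a := star_fix_right hGs haG
  have hG'bs : G' * star b = star b := star_fix_right hG's hbG'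
  have hAG : A * G = A := by rw [hAdef, sub_mul, hGG, mul_assoc, haG]
  have hBG' : B * G' = B := by rw [hBdef, sub_mul, hG'G', mul_assoc, hbG']
  have hAG' : A * G' = 0 := by rw [← hAG, mul_assoc, hGG', mul_zero]
  have hBG : B * G = 0 := by rw [← hBG', mul_assoc, hG'G, mul_zero]
  have hAE₁ : A * E₁ = A := by simpa [hAs] using star_fix_left hE₁s hE₁A
  have hBF₁ : B * F₁ = B := by simpa [hBs] using star_fix_left hF₁s hF₁B
  have hE₁F₁ : E₁ * F₁ = 0 := by rw [hE₁def, sub_mul, hQF₁, hF₁F₁, sub_self]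
  have hF₁E₁0 : F₁ * E₁ = 0 := by rw [hE₁def, mul_sub, hF₁Q, hF₁F₁, sub_self]
  have hBE₁ : B * E₁ = 0 := by rw [← hBF₁, mul_assoc, hF₁E₁0, mul_zero]
  have hAF₁ : A * F₁ = 0 := by rw [← hAE₁, mul_assoc, hE₁F₁, mul_zero]
  have hBa : B * a = 0 := hRa _ (by rw [mul_sub B 1 E₁, mul_one, hBE₁, sub_zero, hBG])
  have hAb : A * b = 0 := hRb _ (by rw [mul_sub A 1 F₁, mul_one, hAF₁, sub_zero, hAG'])
  have hF₁a : F₁ * a = a := by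
    have : (1 - Q) * a = 0 := hRa _ (by
      simp only [mul_sub, sub_mul, one_mul, mul_one, hQE₁, sub_self, sub_zero, hQG])
    have := fix_of_sub_left this
    rw [hF₁E₁, sub_mul, hE₁a, this, sub_zero]
  have hE₁b : E₁ * b = b := by
    have : (1 - Q) * b = 0 := hRb _ (by
      simp only [mul_sub, sub_mul, one_mul, mul_one, hQF₁, sub_self, sub_zero, hQG'])
    have := fix_of_sub_left this
    rw [hE₁def, sub_mul, hF₁b, this, sub_zero]
  obtain ⟨c, hcN, P, hPN, hcpi, hcA, hBc, hPP, hPs, hPc, hPA, hPB⟩ := comparison N A B hA hB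
  have hAcs : A * star c = star c := star_fix_right hAs hcA
  have hcsB : star c * B = star c := star_fix_left hBs hBc
  have hca : star c * a = 0 := by rw [← hcsB, mul_assoc, hBa, mul_zero]
  have hac : star a * c = 0 := by simpa using star_zero_of hca
  have hcb : c * b = 0 := by rw [← hcA, mul_assoc, hAb, mul_zero]
  have hbc : star b * star c = 0 := star_zero_of hcb
  -- a general central-cut lemma
  have cut : ∀ P : H →L[ℂ] H, P ∈ N → P * P = P → star P = P → (∀ y ∈ N, P * y = y * P) →
      ∀ x y w E G : H →L[ℂ] H, x ∈ N → y ∈ N → w ∈ N → IsFiniteProjIn N E → IsProjIn N G →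
      E * x = x → E * y = y → star x * y = 0 → P * (star x * x + star y * y) = P * G →
      star w * w = Q → G * w = w → Q * w = w → G * Q = G →
      P * (w * star w) = P * Q := by
    intro P hPN hPP hPs hPc x y w E G hx hy hw hE hG hEx hEy hxy hsum hwQ hGw hQw hGQ
    obtain ⟨hGN, hGG, hGs⟩ := id hG
    have hyx : star y * x = 0 := by simpa using star_zero_of hxy
    have cproj : ∀ G, IsProjIn N G → IsProjIn N (P * G) := by
      rintro G ⟨hGN, hGG, hGs⟩
      refine ⟨mul_mem hPN hGN, ?_, by rw [star_mul, hGs, hPs, hPc G hGN]⟩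
      rw [mul_assoc, ← mul_assoc G, ← hPc G hGN, mul_assoc P G, hGG, ← mul_assoc, hPP]
    have f1 : IsFiniteProjIn N (P * G) := by
      refine finite_of_le (w := P * (x + y)) (mul_mem hPN (add_mem hx hy)) (cproj G hG) ?_ ?_ hE
      · rw [star_mul, hPs, mul_assoc, reas hPP, ← mul_assoc, ← hPc _ (star_mem (add_mem hx hy)),
          mul_assoc, ← hsum, star_add]
        simp only [add_mul, mul_add, hxy, hyx, add_zero, zero_add]
      · rw [← mul_assoc, ← hPc E hE.1.1, mul_assoc, mul_add, hEx, hEy]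
    have e1 : star (P * w) * (P * w) = P * Q := by
      rw [star_mul, hPs, mul_assoc, reas hPP, ← mul_assoc, ← hPc _ (star_mem hw), mul_assoc, hwQ]
    have e2 : (P * w) * star (P * w) = P * (w * star w) := by
      rw [star_mul, hPs, ← hPc _ (star_mem hw), ← mul_assoc, mul_assoc P w P, ← hPc w hw,
        ← mul_assoc, hPP, mul_assoc]
    have f2 : IsFiniteProjIn N (P * Q) := by
      refine finite_of_le (w := P * w) (mul_mem hPN hw) (cproj Q hQ) e1 ?_ f1
      rw [mul_assoc, ← mul_assoc G, ← hPc G hGN, mul_assoc P G, hGw, ← mul_assoc, hPP]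
    have := f2.2 (P * w) (mul_mem hPN hw) e1 (by
      have hwsQ : star w * Q = star w := star_fix_left hQs hQw
      rw [e2, ← mul_assoc, hPc _ (mul_mem hw (star_mem hw)), mul_assoc _ P P, hPP,
        ← hPc _ (mul_mem hw (star_mem hw)), mul_assoc, mul_assoc, hwsQ])
    rw [← this, e2]
  have hG'Q : G' * Q = G' := by rw [hG'def, sub_mul, hQQ, hGQ]
  have r0 : P * (u₀ * star u₀) = P * Q :=
    cut P hPN hPP hPs hPc c a u₀ F₁ G hcN haN hu₀ hF₁f hG
      (by rw [← hBc, ← mul_assoc, hF₁B]) hF₁a hca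
      (by rw [mul_add, ← hPA, ← mul_add, hAdef, sub_add_cancel]) hu₀Q hGu₀ hQu₀ hGQ
  have r1 : (1 - P) * (u₁ * star u₁) = (1 - P) * Q :=
    cut (1 - P) (sub_mem (one_mem N) hPN)
      (by simp only [mul_sub, sub_mul, hPP, one_mul, mul_one, sub_self, sub_zero])
      (by rw [star_sub, star_one, hPs])
      (fun y hy => by rw [sub_mul, mul_sub, hPc y hy, one_mul, mul_one])
      (star c) b u₁ E₁ G' (star_mem hcN) hbN hu₁ hE₁f hG'
      (by rw [← hAcs, ← mul_assoc, hE₁A]) hE₁b (by rw [star_star, hcb])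
      (by rw [star_star, mul_add, ← hPB, ← mul_add, hBdef, sub_add_cancel]) hu₁Q hG'u₁ hQu₁ hG'Q
  have s0 : P * u₁ = 0 := by
    have := congrArg (fun z => z * u₁) r0
    simp only [mul_assoc, h01, mul_zero, hQu₁] at this
    exact this.symm
  have s1 : (1 - P) * u₀ = 0 := by
    have := congrArg (fun z => z * u₀) r1
    simp only [mul_assoc, h10, mul_zero, hQu₀] at this
    exact this.symm
  apply hQ0
  have t0 : P * Q = 0 := by
    rw [← hu₁Q, ← mul_assoc, hPc _ (star_mem hu₁), mul_assoc, s0, mul_zero]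
  have t1 : Q = P * Q := by
    have : u₀ = P * u₀ := by
      rwa [sub_mul, one_mul, sub_eq_zero] at s1
    rw [← hu₀Q, ← mul_assoc, hPc _ (star_mem hu₀), mul_assoc, ← this]
  rw [t1, t0]

/-- Two finite projections are dominated by a finite projection. -/
theorem finite_sup {N : VonNeumannAlgebra H} {p q : H →L[ℂ] H} (hp : IsFiniteProjIn N p)
    (hq : IsFiniteProjIn N q) : ∃ f, IsFiniteProjIn N f ∧ f * p = p ∧ f * q = q := by
  obtain ⟨a, haN, hapi, hap, haq, hpa, -, -, -, hax⟩ := split_proj hp.1 hq.1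
  obtain ⟨hpN, hpp, hps⟩ := hp.1
  have hqa := star_fix_right hq.1.2.2 haq
  have h1 : IsFiniteProjIn N (star a * a) :=
    finite_sub hap (by rw [← mul_assoc, hqa]) hq
  have hapi' : star a * (a * star a) = star a := by
    have := congrArg star hapi
    simpa only [star_mul, star_star] using this
  have h2p : IsProjIn N (a * star a) := by
    refine ⟨mul_mem haN (star_mem haN), ?_, by rw [star_mul, star_star]⟩
    rw [← mul_assoc, hapi]
  have h2 : IsFiniteProjIn N (a * star a) := by
    refine finite_of_le (w := star a) (star_mem haN) h2p (by rw [star_star]) ?_ h1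
    rw [mul_assoc, hapi']
  have hap0 : star a * p = 0 := by
    have := star_zero_of hpa
    rwa [hps] at this
  refine ⟨p + a * star a, finite_add hp h2 (by rw [← mul_assoc, hpa, zero_mul]), ?_, ?_⟩
  · rw [add_mul, hpp, mul_assoc, hap0, mul_zero, add_zero]
  · rw [sub_mul, one_mul, mul_sub, mul_assoc, mul_assoc, reas hap0, zero_mul, mul_zero,
      sub_zero] at hax
    rw [add_mul, mul_assoc, hax]
    abel

theorem proj_trans {x f p : H →L[ℂ] H} (hfp : f * p = p) (h : p * x = x) : f * x = x := by
  rw [← h, ← mul_assoc, hfp]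

/-- left supports of `a * p` -/
theorem left_support {N : VonNeumannAlgebra H} {a p : H →L[ℂ] H} (ha : a ∈ N)
    (hp : IsFiniteProjIn N p) : ∃ f, IsFiniteProjIn N f ∧ f * (a * p) = a * p := by
  obtain ⟨hpN, hpp, hps⟩ := hp.1
  obtain ⟨u, huN, hpi, hxu, hux, k1, k2⟩ := exists_polar N (mul_mem ha hpN)
  have hup : u * p = u := fix_of_sub_right (k1 _ (by
    rw [mul_sub, mul_one, mul_assoc, hpp, sub_self]))
  refine ⟨u * star u, ?_, hux⟩
  refine finite_of_le (w := star u) (star_mem huN)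
    ⟨mul_mem huN (star_mem huN), ?_, by rw [star_mul, star_star]⟩ (by rw [star_star])
    (star_fix_right hps hup) hp
  rw [← mul_assoc, hpi]

theorem span_supported {N : VonNeumannAlgebra H} {F : H →L[ℂ] H}
    (hF : F ∈ Submodule.span ℂ {y : H →L[ℂ] H |
      ∃ a b p : H →L[ℂ] H, a ∈ N ∧ b ∈ N ∧ IsFiniteProjIn N p ∧ y = a * p * b}) :
    ∃ f, IsFiniteProjIn N f ∧ f * F = F ∧ F * f = F := by
  induction hF using Submodule.span_induction with
  | mem x hx =>
    obtain ⟨a, b, p, ha, hb, hp, rfl⟩ := hx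
    obtain ⟨f, hf, hfa⟩ := left_support ha hp
    obtain ⟨g, hg, hgb⟩ := left_support (star_mem hb) hp
    obtain ⟨r, hr, hrf, hrg⟩ := finite_sup hf hg
    have h1 := proj_trans hrf hfa
    have h2 := proj_trans hrg hgb
    refine ⟨r, hr, by rw [← mul_assoc, h1], ?_⟩
    have h3 := star_fix_left hr.1.2.2 h2
    rw [star_mul, star_star, hp.1.2.2] at h3
    rw [mul_assoc, mul_assoc, ← mul_assoc p, h3, ← mul_assoc]
  | zero =>
    refine ⟨0, ⟨⟨zero_mem N, mul_zero _, star_zero _⟩, ?_⟩, mul_zero _, mul_zero _⟩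
    intro v _ _ h
    rw [← h, mul_zero]
  | add x y _ _ hx hy =>
    obtain ⟨f, hf, hf1, hf2⟩ := hx
    obtain ⟨g, hg, hg1, hg2⟩ := hy
    obtain ⟨r, hr, hrf, hrg⟩ := finite_sup hf hg
    have hfr : f * r = f := by simpa [hf.1.2.2] using star_fix_left hr.1.2.2 hrf
    have hgr : g * r = g := by simpa [hg.1.2.2] using star_fix_left hr.1.2.2 hrg
    refine ⟨r, hr, ?_, ?_⟩
    · rw [mul_add, proj_trans hrf hf1, proj_trans hrg hg1]
    · have e1 : x * r = x := by rw [← hf2, mul_assoc, hfr]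
      have e2 : y * r = y := by rw [← hg2, mul_assoc, hgr]
      rw [add_mul, e1, e2]
  | smul c x _ hx =>
    obtain ⟨f, hf, hf1, hf2⟩ := hx
    refine ⟨f, hf, ?_, ?_⟩
    · rw [mul_smul_comm, hf1]
    · rw [smul_mul_assoc, hf2]

/-- for a semifinite von Neumann algebra `N` and `T ∈ N` with modulus
`|T| = aT` and spectral projections `e s = e_{[s,∞)}(|T|)` (characterized by:
`e s` is a projection in `N` commuting with `|T|`, with `|T| ≥ s` on its range and
`|T| ≤ s` on the range of its complement), one has `T ∈ J(N)` iff every `e s`,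
`s > 0`, is a finite projection.  Consequently, elements supported on finite
projections are norm dense in `J(N)`. -/
theorem stmt14 (N : VonNeumannAlgebra H)
    (hsemifinite : ∀ p, IsProjIn N p → p ≠ 0 →
        ∃ q, IsFiniteProjIn N q ∧ q ≠ 0 ∧ q * p = q)
    (T : H →L[ℂ] H) (hT : T ∈ N)
    (aT : H →L[ℂ] H) (haT : aT ∈ N)
    (haT_pos : ∃ y : H →L[ℂ] H, y ∈ N ∧ aT = star y * y)
    (haT_sq : aT * aT = star T * T)
    (e : ℝ → H →L[ℂ] H)
    (he : ∀ s : ℝ, 0 < s → IsProjIn N (e s) ∧ Commute (e s) aT ∧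
        (∃ y : H →L[ℂ] H, aT * e s - s • e s = star y * y) ∧
        (∃ y : H →L[ℂ] H, s • (1 - e s) - aT * (1 - e s) = star y * y)) :
    (T ∈ compactIdealSpace N ↔ ∀ s : ℝ, 0 < s → IsFiniteProjIn N (e s)) ∧
    (∀ S ∈ compactIdealSpace N, ∀ ε : ℝ, 0 < ε →
      ∃ S' ∈ compactIdealSpace N,
        (∃ f, IsFiniteProjIn N f ∧ f * S' * f = S') ∧ ‖S - S'‖ < ε) := by
  obtain ⟨y₀, -, hy₀⟩ := haT_pos
  have haTs : star aT = aT := by rw [hy₀, star_mul, star_star]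
  have hnorm : ∀ k, ‖aT k‖ = ‖T k‖ := norm_eq_of_star_mul (by rw [haTs, haT_sq])
  refine ⟨⟨?_, ?_⟩, ?_⟩
  · intro hTJ s hs
    obtain ⟨heP, hcomm, ⟨y, hy⟩, -⟩ := he s hs
    obtain ⟨heN, hee, hes⟩ := id heP
    obtain ⟨F, hF, hdist⟩ := Metric.mem_closure_iff.1 hTJ s hs
    rw [dist_eq_norm] at hdist
    obtain ⟨f, hf, -, hFf⟩ := span_supported hF
    obtain ⟨w, hwN, hpi, hxw, hwx, k1, k2⟩ := exists_polar N (mul_mem hf.1.1 heN)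
    have hwe : w * e s = w := fix_of_sub_right (k1 _ (by
      rw [mul_sub, mul_one, mul_assoc, hee, sub_self]))
    have hew : e s * star w = star w := star_fix_right hes hwe
    have hfw : f * w = w := by
      have := star_fix_left (x := w) (p := f) hf.1.2.2
      have h1 : star w * f = star w := fix_of_sub_right (k2 _ (by
        rw [star_mul, hf.1.2.2, hes, mul_sub, mul_one, mul_assoc, hf.1.2.1, sub_self]))
      have := star_fix_right hf.1.2.2 h1
      rwa [star_star] at this
    have hww : star w * w = e s := by
      set r := e s - star w * w with hr
      have her : e s * r = r := by rw [hr, mul_sub, hee, ← mul_assoc, hew]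
      have hfr : f * r = 0 := by
        have : f * e s * r = 0 := by
          rw [hr, mul_sub, hxw, mul_assoc, hee, sub_self]
        rwa [mul_assoc, her] at this
      have hFr : F * r = 0 := by rw [← hFf, mul_assoc, hfr, mul_zero]
      have hr0 : r = 0 := by
        ext k
        set m := r k with hm
        have hem : e s m = m := congrArg (fun f : H →L[ℂ] H => f k) her
        have hFm : F m = 0 := congrArg (fun f : H →L[ℂ] H => f k) hFr
        have h1 : 0 ≤ RCLike.re (inner ℂ m ((aT * e s - s • e s) m)) := by
          rw [hy, opmul_apply, inner_star_right]
          exact inner_self_nonneg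
        have h2 : (aT * e s - s • e s) m = aT m - (s : ℂ) • m := by
          rw [sub_apply, opmul_apply, hem, smul_apply, hem]
          rfl
        rw [h2, inner_sub_right, inner_smul_right, inner_self_eq_norm_sq_to_K, map_sub] at h1
        have h3 : RCLike.re ((s : ℂ) * ((‖m‖ : ℂ))^2) = s * ‖m‖^2 := by
          rw [← Complex.ofReal_pow, ← Complex.ofReal_mul]
          exact Complex.ofReal_re _
        have h4 : RCLike.re (inner ℂ m (aT m)) ≤ ‖m‖ * ‖aT m‖ := re_inner_le_norm _ _
        have h5 : s * ‖m‖^2 ≤ ‖m‖ * ‖aT m‖ := by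
          have : 0 ≤ RCLike.re (inner ℂ m (aT m)) - s * ‖m‖^2 := by
            rw [← h3]; exact h1
          linarith
        have h6 : ‖aT m‖ ≤ ‖T - F‖ * ‖m‖ := by
          rw [hnorm]
          have := (T - F).le_opNorm m
          rwa [sub_apply, hFm, sub_zero] at this
        by_contra hne
        have hpos : 0 < ‖m‖ := norm_pos_iff.2 hne
        have : ‖m‖ * ‖aT m‖ ≤ ‖m‖ * (‖T - F‖ * ‖m‖) := by gcongr
        nlinarith [mul_pos hpos hpos]
      exact (sub_eq_zero.1 hr0).symm
    exact finite_of_le hwN heP hww hfw hf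
  · intro hfin
    refine Metric.mem_closure_iff.2 fun ε hε => ?_
    have hs : 0 < ε / 2 := by positivity
    set s := ε / 2 with hsdef
    obtain ⟨⟨heN, hee, hes⟩, hcomm, -, ⟨y, hy⟩⟩ := he s hs
    refine ⟨T * e s, Submodule.subset_span ⟨T, 1, e s, hT, one_mem N, hfin s hs, by rw [mul_one]⟩,
      ?_⟩
    rw [dist_eq_norm]
    have hb : ‖aT * (1 - e s)‖ ≤ s := by
      set g := 1 - e s with hg
      have hgg : g * g = g := by
        rw [hg, mul_sub, mul_one, sub_mul, one_mul, hee, sub_self, sub_zero]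
      have hgs : star g = g := by rw [hg, star_sub, star_one, hes]
      have hgc : g * aT = aT * g := by
        rw [hg, sub_mul, mul_sub, one_mul, mul_one, hcomm.eq]
      have hpos : 0 ≤ aT * g := by
        have : aT * g = star (y₀ * g) * (y₀ * g) := by
          rw [star_mul, hgs, mul_assoc, ← mul_assoc (star y₀), ← hy₀, ← mul_assoc, hgc, mul_assoc,
            hgg]
        rw [this]
        exact star_mul_self_nonneg _
      rw [CStarAlgebra.norm_le_iff_le_algebraMap _ hs.le hpos]
      have h1 : aT * g ≤ s • g := by
        rw [← sub_nonneg, hy]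
        exact star_mul_self_nonneg _
      have h2 : s • g ≤ s • (1 : H →L[ℂ] H) := by
        rw [← sub_nonneg, ← smul_sub]
        have : (1 : H →L[ℂ] H) - g = star (e s) * e s := by
          rw [hg, sub_sub_cancel, hes, hee]
        rw [this]
        exact smul_nonneg hs.le (star_mul_self_nonneg _)
      rw [Algebra.algebraMap_eq_smul_one]
      exact h1.trans h2
    have hb2 : ‖T - T * e s‖ ≤ s := by
      refine opNorm_le_bound _ hs.le fun k => ?_
      have h1 : (T - T * e s) k = T ((1 - e s) k) := by
        rw [sub_apply, opmul_apply, sub_apply, map_sub]; rfl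
      rw [h1, ← hnorm]
      have h2 := le_opNorm (aT * (1 - e s)) k
      exact h2.trans (mul_le_mul_of_nonneg_right hb (norm_nonneg k))
    linarith
  · intro S hS ε hε
    obtain ⟨F, hF, hdist⟩ := Metric.mem_closure_iff.1 hS ε hε
    rw [dist_eq_norm] at hdist
    obtain ⟨f, hf, hfF, hFf⟩ := span_supported hF
    exact ⟨F, subset_closure hF, ⟨f, hf, by rw [hfF, hFf]⟩, hdist⟩
end
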